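/- For every odd prime p, every real-valued function f on F_p, every set P ⊆ F_p∖{0}, and every integer k ≥ 1, one has ( ∑_{x∈P} ((f∘f)(x))^k )⁴ ≤ ‖f‖₂^{4k} · E⁺_{2k}(f) · E⁺(P). -/

import Mathlib

open Finset

/-- `(f∘f)(x) = ∑_y f(y)·f(y+x)`. -/
noncomputable def corr (p : ℕ) [NeZero p] (f : ZMod p → ℝ) (x : ZMod p) : ℝ :=
  ∑ y, f y * f (y + x)

/-- `E⁺_m(f) = ∑_x ((f∘f)(x))^m`. -/
noncomputable def EplusF (p : ℕ) [NeZero p] (m : ℕ) (f : ZMod p → ℝ) : ℝ :=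
  ∑ x, (corr p f x) ^ m

/-- The additive energy of a set: quadruples `(p₁,p₂,p₃,p₄) ∈ P⁴` with `p₁+p₂ = p₃+p₄`. -/
def addEnergy (p : ℕ) (P : Finset (ZMod p)) : ℕ :=
  (((P ×ˢ P) ×ˢ P ×ˢ P).filter fun x => x.1.1 + x.1.2 = x.2.1 + x.2.2).card

/-!
Apply Cauchy–Schwarz twice. On a finite group `G`, `(f∘f)(x)^k` is the autocorrelation of `f^{⊗k}`
on `G^k` at the diagonal point `(x, …, x)`, so Cauchy–Schwarz over `G^k` bounds the square of
`∑_{x ∈ P} (f∘f)(x)^k` by `‖f‖₂^{2k} ∑_{x, y ∈ P} (f∘f)(x - y)^k`. Collecting the pairs `(x, y)` by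
their difference and applying Cauchy–Schwarz over `G` bounds the square of the last sum by
`E⁺_{2k}(f) E⁺(P)`, because `E⁺(P)` is the second moment of the number of representations as a
difference.
-/

open scoped Combinatorics.Additive

section Autocorrelation

variable {ι G R : Type*} [Fintype G] [CommSemiring R]

/-- The autocorrelation `f∘f` of a function on a finite additive group; on `ZMod p` it unfolds to
`corr p f`. The group has to vary, because powers of `f∘f` are studied as autocorrelations on
`G^k`. -/
def autocorr [Add G] (f : G → R) (x : G) : R :=
  ∑ y, f y * f (y + x)

lemma autocorr_prod [Fintype ι] [DecidableEq ι] {H : ι → Type*} [∀ i, Add (H i)]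
    [∀ i, Fintype (H i)] (f : ∀ i, H i → R) (x : ∀ i, H i) :
    autocorr (fun y : ∀ i, H i ↦ ∏ i, f i (y i)) x = ∏ i, autocorr (f i) (x i) := by
  simp only [autocorr, Pi.add_apply, ← prod_mul_distrib, Fintype.prod_sum]

variable [AddGroup G]

lemma sum_translate_mul_translate (f : G → R) (a b : G) :
    ∑ y, f (y + a) * f (y + b) = autocorr f (-a + b) := by
  rw [autocorr, ← Equiv.sum_comp (Equiv.addRight a) fun y ↦ f y * f (y + (-a + b))]
  simp [add_assoc]

lemma sum_sq_sum_translate (f : G → R) (s : Finset ι) (u : ι → G) :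
    ∑ y, (∑ i ∈ s, f (y + u i)) ^ 2 = ∑ ij ∈ s ×ˢ s, autocorr f (-u ij.2 + u ij.1) := by
  simp_rw [← sum_translate_mul_translate, sq, sum_mul_sum]
  rw [sum_comm, sum_product_right]
  refine sum_congr rfl fun i _ ↦ ?_
  rw [sum_comm]

variable [LinearOrder R] [IsStrictOrderedRing R] [ExistsAddOfLE R]

lemma sq_sum_autocorr_le (f : G → R) (s : Finset ι) (u : ι → G) :
    (∑ i ∈ s, autocorr f (u i)) ^ 2 ≤
      (∑ y, f y ^ 2) * ∑ ij ∈ s ×ˢ s, autocorr f (-u ij.2 + u ij.1) := by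
  have sum_autocorr : ∑ i ∈ s, autocorr f (u i) = ∑ y, f y * ∑ i ∈ s, f (y + u i) := by
    simp_rw [autocorr, mul_sum]
    exact sum_comm
  rw [sum_autocorr, ← sum_sq_sum_translate]
  exact sum_mul_sq_le_sq_mul_sq _ _ _

lemma sq_sum_autocorr_pow_le (f : G → R) (P : Finset G) (k : ℕ) :
    (∑ x ∈ P, autocorr f x ^ k) ^ 2 ≤
      (∑ x, f x ^ 2) ^ k * ∑ xy ∈ P ×ˢ P, autocorr f (-xy.2 + xy.1) ^ k := by
  let tensorPow : (Fin k → G) → R := fun y ↦ ∏ i, f (y i)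
  have autocorr_diagonal (x : G) :
      autocorr tensorPow (Function.const (Fin k) x) = autocorr f x ^ k := by
    simp [tensorPow, autocorr_prod fun _ ↦ f]
  have sum_sq_tensorPow : ∑ y, tensorPow y ^ 2 = (∑ x, f x ^ 2) ^ k := by
    simp_rw [tensorPow, Fintype.sum_pow, prod_pow]
  simpa only [Function.const_neg, Function.const_add, autocorr_diagonal, sum_sq_tensorPow]
    using sq_sum_autocorr_le tensorPow P (Function.const (Fin k))

end Autocorrelation

section Fibers

variable {ι κ R : Type*} [Fintype κ] [DecidableEq κ]

lemma sum_sq_card_fiber (s : Finset ι) (φ : ι → κ) :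
    ∑ d, #{i ∈ s | φ i = d} ^ 2 = #{ij ∈ s ×ˢ s | φ ij.1 = φ ij.2} := by
  rw [card_eq_sum_card_fiberwise (f := fun ij ↦ φ ij.1) (t := univ) (by simp)]
  refine sum_congr rfl fun d _ ↦ ?_
  rw [sq, ← card_product, ← filter_product, filter_filter]
  congr! 2
  grind

lemma sq_sum_comp_le_sum_sq_mul_sum_sq_card_fiber [CommSemiring R] [LinearOrder R]
    [IsStrictOrderedRing R] [ExistsAddOfLE R] (s : Finset ι) (φ : ι → κ) (g : κ → R) :
    (∑ i ∈ s, g (φ i)) ^ 2 ≤ (∑ d, g d ^ 2) * ∑ d, (#{i ∈ s | φ i = d} : R) ^ 2 := by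
  have sum_by_fibers : ∑ i ∈ s, g (φ i) = ∑ d, g d * #{i ∈ s | φ i = d} := by
    simp_rw [← sum_fiberwise' s φ g, sum_const, nsmul_eq_mul, mul_comm]
  rw [sum_by_fibers]
  exact sum_mul_sq_le_sq_mul_sq _ _ _

end Fibers

section Energy

variable {G R : Type*} [AddCommGroup G] [Fintype G] [DecidableEq G]

lemma addEnergy_eq_sum_sq_card_sub (s t : Finset G) :
    E[s, t] = ∑ d, #{xy ∈ s ×ˢ t | xy.1 - xy.2 = d} ^ 2 := by
  rw [sum_sq_card_fiber, Finset.addEnergy]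
  -- `a₁ + b₁ = a₂ + b₂` if and only if `a₁ - b₂ = a₂ - b₁`.
  let swapSecondPair := (Equiv.refl (G × G)).prodCongr (Equiv.prodComm G G)
  refine card_equiv (swapSecondPair.trans (.prodProdProdComm G G G G)) ?_
  simp [swapSecondPair, sub_eq_sub_iff_add_eq_add, and_and_and_comm, and_comm]

variable [CommSemiring R] [LinearOrder R] [IsStrictOrderedRing R] [ExistsAddOfLE R]

lemma sq_sum_sub_le_sum_sq_mul_addEnergy (g : G → R) (s t : Finset G) :
    (∑ xy ∈ s ×ˢ t, g (xy.1 - xy.2)) ^ 2 ≤ (∑ d, g d ^ 2) * E[s, t] := by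
  rw [addEnergy_eq_sum_sq_card_sub]
  exact_mod_cast
    sq_sum_comp_le_sum_sq_mul_sum_sq_card_fiber (s ×ˢ t) (fun xy ↦ xy.1 - xy.2) g

theorem stmt19_general (f : G → R) (P : Finset G) (k : ℕ) :
    (∑ x ∈ P, autocorr f x ^ k) ^ 4 ≤
      (∑ x, f x ^ 2) ^ (2 * k) * (∑ x, autocorr f x ^ (2 * k)) * E[P] := by
  have first_cauchy_schwarz := sq_sum_autocorr_pow_le f P k
  simp only [neg_add_eq_sub] at first_cauchy_schwarz
  calc (∑ x ∈ P, autocorr f x ^ k) ^ 4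
      = ((∑ x ∈ P, autocorr f x ^ k) ^ 2) ^ 2 := by rw [← pow_mul]
    _ ≤ ((∑ x, f x ^ 2) ^ k * ∑ xy ∈ P ×ˢ P, autocorr f (xy.1 - xy.2) ^ k) ^ 2 :=
        pow_le_pow_left₀ (sq_nonneg _) first_cauchy_schwarz 2
    _ = (∑ x, f x ^ 2) ^ (2 * k) * (∑ xy ∈ P ×ˢ P, autocorr f (xy.1 - xy.2) ^ k) ^ 2 := by
        rw [mul_pow, pow_mul']
    _ ≤ (∑ x, f x ^ 2) ^ (2 * k) * ((∑ x, (autocorr f x ^ k) ^ 2) * E[P]) := by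
        rw [pow_mul']
        exact mul_le_mul_of_nonneg_left
          (sq_sum_sub_le_sum_sq_mul_addEnergy (fun d ↦ autocorr f d ^ k) P P) (sq_nonneg _)
    _ = (∑ x, f x ^ 2) ^ (2 * k) * (∑ x, autocorr f x ^ (2 * k)) * E[P] := by
        simp_rw [pow_mul', mul_assoc]

end Energy

theorem stmt19 :
    ∀ (p : ℕ) [Fact p.Prime], Odd p →
      ∀ (f : ZMod p → ℝ) (P : Finset (ZMod p)), (0 : ZMod p) ∉ P →
        ∀ k : ℕ, 1 ≤ k →
          (∑ x ∈ P, (corr p f x) ^ k) ^ 4 ≤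
            (Real.sqrt (∑ x, (f x) ^ 2)) ^ (4 * k) * EplusF p (2 * k) f *
              (addEnergy p P : ℝ) := by
  intro p _ _ f P _ k _
  rw [show 4 * k = 2 * (2 * k) by ring, pow_mul, Real.sq_sqrt (by positivity)]
  exact (stmt19_general f P k).trans_eq (by rw [addEnergy_eq_card_filter]; rfl)
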